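/- Let S be a nonempty finite set, let d : S → ℝ with d_s ≠ 0 for all s ∈ S, and for each s ∈ S let P_s be a 2^n × 2^n complex matrix that is a Kronecker product of n matrices each belonging to {I₂, X, Z} (so each P_s is Hermitian with P_s² = I). Let σ be a density matrix of size 2^n × 2^n, let H = Σ_{s∈S} d_s·P_s, and let D = Σ_{s∈S} |d_s| (so D > 0). Then Σ_{s∈S} (|d_s|/D) · (1 − sign(d_s)·Re Tr(P_s σ))/2 = 1/2 − Re Tr(H σ)/(2D). (The left-hand side is the probability, when a term s is drawn with probability |d_s|/D and the ±1-valued observable P_s is measured on the state σ, that the outcome equals −sign(d_s).) -/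

import Mathlib

open Matrix BigOperators
open scoped ComplexOrder

noncomputable def pauliX : Matrix (Fin 2) (Fin 2) ℂ := !![0, 1; 1, 0]
noncomputable def pauliZ : Matrix (Fin 2) (Fin 2) ℂ := !![1, 0; 0, -1]

/-- The Kronecker product of a family of `n` 2×2 matrices, as a `2^n × 2^n` matrix
whose rows and columns are indexed by bit strings of length `n`. -/
noncomputable def kronPowFam {n : ℕ} (M : Fin n → Matrix (Fin 2) (Fin 2) ℂ) :
    Matrix (Fin n → Fin 2) (Fin n → Fin 2) ℂ :=
  Matrix.of fun x y => ∏ i, M i (x i) (y i)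

theorem abs_mul_realSign (x : ℝ) : |x| * Real.sign x = x := by
  obtain hx | rfl | hx := lt_trichotomy x 0
  · rw [abs_of_neg hx, Real.sign_of_neg hx, mul_neg_one, neg_neg]
  · rw [abs_zero, zero_mul]
  · rw [abs_of_pos hx, Real.sign_of_pos hx, mul_one]

theorem sum_abs_div_mul_one_sub_sign_mul_div_two {ι : Type*} (s : Finset ι) (d a : ι → ℝ)
    (hd : ∑ i ∈ s, |d i| ≠ 0) :
    ∑ i ∈ s, |d i| / (∑ j ∈ s, |d j|) * ((1 - Real.sign (d i) * a i) / 2)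
      = 1 / 2 - (∑ i ∈ s, d i * a i) / (2 * ∑ i ∈ s, |d i|) := by
  set D := ∑ i ∈ s, |d i| with hD
  have term_eq (i : ι) :
      |d i| / D * ((1 - Real.sign (d i) * a i) / 2) = (|d i| - d i * a i) / (2 * D) := by
    calc |d i| / D * ((1 - Real.sign (d i) * a i) / 2)
        = (|d i| - |d i| * Real.sign (d i) * a i) / (2 * D) := by ring
      _ = (|d i| - d i * a i) / (2 * D) := by rw [abs_mul_realSign]
  calc ∑ i ∈ s, |d i| / D * ((1 - Real.sign (d i) * a i) / 2)
      = ∑ i ∈ s, (|d i| - d i * a i) / (2 * D) := Finset.sum_congr rfl fun i _ => term_eq i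
    _ = (D - ∑ i ∈ s, d i * a i) / (2 * D) := by
      rw [← Finset.sum_div, Finset.sum_sub_distrib, ← hD]
    _ = 1 / 2 - (∑ i ∈ s, d i * a i) / (2 * D) := by field_simp

theorem re_trace_sum_smul_mul {𝕜 ι m n : Type*} [RCLike 𝕜] [Fintype m] [Fintype n]
    (s : Finset ι) (d : ι → ℝ) (P : ι → Matrix m n 𝕜) (σ : Matrix n m 𝕜) :
    RCLike.re ((∑ i ∈ s, (d i : 𝕜) • P i) * σ).trace
      = ∑ i ∈ s, d i * RCLike.re (P i * σ).trace := by
  simp only [Matrix.sum_mul, Matrix.smul_mul, Matrix.trace_sum, Matrix.trace_smul, smul_eq_mul,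
    map_sum, RCLike.re_ofReal_mul]

theorem stmt0_general {𝕜 S m : Type*} [RCLike 𝕜] [Fintype S] [Fintype m]
    (d : S → ℝ) (hd : d ≠ 0) (P : S → Matrix m m 𝕜) (σ : Matrix m m 𝕜)
    (H : Matrix m m 𝕜) (hH : H = ∑ s, (d s : 𝕜) • P s) (D : ℝ) (hD : D = ∑ s, |d s|) :
    ∑ s, (|d s| / D) * ((1 - Real.sign (d s) * RCLike.re (P s * σ).trace) / 2)
      = 1 / 2 - RCLike.re (H * σ).trace / (2 * D) := by
  obtain ⟨s, hs⟩ := Function.ne_iff.1 hd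
  have sum_abs_pos : 0 < ∑ s, |d s| :=
    Finset.sum_pos' (fun _ _ => abs_nonneg _) ⟨s, Finset.mem_univ s, abs_pos.2 hs⟩
  rw [hH, hD, re_trace_sum_smul_mul]
  exact sum_abs_div_mul_one_sub_sign_mul_div_two _ d _ sum_abs_pos.ne'

theorem stmt0 {S : Type*} [Fintype S] [Nonempty S] (n : ℕ)
    (d : S → ℝ) (hd : ∀ s, d s ≠ 0)
    (P : S → Matrix (Fin n → Fin 2) (Fin n → Fin 2) ℂ)
    (hP : ∀ s, ∃ M : Fin n → Matrix (Fin 2) (Fin 2) ℂ,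
      (∀ i, M i = 1 ∨ M i = pauliX ∨ M i = pauliZ) ∧ P s = kronPowFam M)
    (σ : Matrix (Fin n → Fin 2) (Fin n → Fin 2) ℂ)
    (hσ : σ.PosSemidef) (hσtr : σ.trace = 1)
    (H : Matrix (Fin n → Fin 2) (Fin n → Fin 2) ℂ)
    (hH : H = ∑ s, (d s : ℂ) • P s)
    (D : ℝ) (hD : D = ∑ s, |d s|) :
    ∑ s, (|d s| / D) * ((1 - Real.sign (d s) * ((P s * σ).trace).re) / 2)
      = 1 / 2 - ((H * σ).trace).re / (2 * D) :=
  stmt0_general d (Function.ne_iff.2 ⟨Classical.arbitrary S, hd _⟩) P σ H hH D hD
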